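/- Let α ∈ (0,π), γ ∈ [0,π/2], and B = (sin γ·cos(α/2), sin γ·sin(α/2), cos γ). Then λ(B;W_α) ≤ α·( 1/√3 + (√3/2)·sin²γ ). -/

import Mathlib

open Real MeasureTheory Set Filter

noncomputable section

namespace MagWedge

/-- The infinite sector `S_α := {(x₁,x₂) : |x₂| ≤ x₁·tan(α/2)}`. -/
def sector (α : ℝ) : Set (ℝ × ℝ) :=
  {x | |x.2| ≤ x.1 * Real.tan (α / 2)}

/-- The infinite wedge `W_α := S_α × ℝ` (coordinates `(x₁, x₂, x₃)`). -/
def wedge (α : ℝ) : Set (ℝ × ℝ × ℝ) :=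
  {x | |x.2.1| ≤ x.1 * Real.tan (α / 2)}

/-- The upper half-plane `Hp^up := {x₂ < x₁·tan(α/2)}`. -/
def hpUp (α : ℝ) : Set (ℝ × ℝ) :=
  {x | x.2 < x.1 * Real.tan (α / 2)}

/-- The lower half-plane `Hp^low := {x₂ > −x₁·tan(α/2)}`. -/
def hpLow (α : ℝ) : Set (ℝ × ℝ) :=
  {x | -(x.1 * Real.tan (α / 2)) < x.2}

/-- The magnetic/electric energy of `u` on a planar domain `Ω`, for magnetic field
`(b₁,b₂,b₃)` (gauge `A̲ = (−x₂ b₃, 0)`) and Fourier parameter `τ`. -/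
def energy2D (Ω : Set (ℝ × ℝ)) (b1 b2 b3 τ : ℝ) (u : ℝ × ℝ → ℂ) : ℝ :=
  ∫ x in Ω,
    ‖(-Complex.I) * fderiv ℝ u x (1, 0) + ((x.2 * b3 : ℝ) : ℂ) * u x‖ ^ 2
      + ‖fderiv ℝ u x (0, 1)‖ ^ 2
      + (x.1 * b2 - x.2 * b1 - τ) ^ 2 * ‖u x‖ ^ 2

/-- The squared `L²`-norm of `u` on a planar domain `Ω`. -/
def norm2D (Ω : Set (ℝ × ℝ)) (u : ℝ × ℝ → ℂ) : ℝ := ∫ x in Ω, ‖u x‖ ^ 2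

/-- The bottom of the spectrum of the Neumann realization of
`(−i∇−A̲)² + (x₁b₂−x₂b₁−τ)²` on `Ω`, via the Rayleigh quotient. -/
def specInf2D (Ω : Set (ℝ × ℝ)) (b1 b2 b3 τ : ℝ) : ℝ :=
  sInf { r : ℝ | ∃ u : ℝ × ℝ → ℂ, ContDiff ℝ (⊤ : ℕ∞) u ∧ HasCompactSupport u ∧
    0 < norm2D Ω u ∧ r = energy2D Ω b1 b2 b3 τ u / norm2D Ω u }

/-- The band function `s(B;α,τ)` on the sector `S_α`. -/
def bandFn (α b1 b2 b3 τ : ℝ) : ℝ := specInf2D (sector α) b1 b2 b3 τ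

/-- `Σ(B;α,τ,R)` : the Rayleigh quotient infimum over functions supported outside the
(closed Euclidean) ball of radius `R` centered at the origin. -/
def SigmaR (α b1 b2 b3 τ R : ℝ) : ℝ :=
  sInf { r : ℝ | ∃ u : ℝ × ℝ → ℂ, ContDiff ℝ (⊤ : ℕ∞) u ∧ HasCompactSupport u ∧
    (tsupport u ⊆ {x : ℝ × ℝ | R ^ 2 < x.1 ^ 2 + x.2 ^ 2}) ∧
    0 < norm2D (sector α) u ∧
    r = energy2D (sector α) b1 b2 b3 τ u / norm2D (sector α) u }

/-- The bottom of the essential spectrum via Persson's characterization: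
`s_ess(B;α,τ) = sup_{R>0} Σ(B;α,τ,R)`. -/
def sEss (α b1 b2 b3 τ : ℝ) : ℝ :=
  sSup { r : ℝ | ∃ R > (0 : ℝ), r = SigmaR α b1 b2 b3 τ R }

/-- The 3D magnetic energy on a domain `Ω ⊆ ℝ³` for the constant field `(b₁,b₂,b₃)`,
in the gauge `A = (−x₂b₃, 0, x₂b₁ − x₁b₂)`. -/
def energy3D (Ω : Set (ℝ × ℝ × ℝ)) (b1 b2 b3 : ℝ) (u : ℝ × ℝ × ℝ → ℂ) : ℝ :=
  ∫ x in Ω,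
    ‖(-Complex.I) * fderiv ℝ u x (1, 0, 0) + ((x.2.1 * b3 : ℝ) : ℂ) * u x‖ ^ 2
      + ‖fderiv ℝ u x (0, 1, 0)‖ ^ 2
      + ‖(-Complex.I) * fderiv ℝ u x (0, 0, 1) - ((x.2.1 * b1 : ℝ) : ℂ) * u x
          + ((x.1 * b2 : ℝ) : ℂ) * u x‖ ^ 2

/-- The squared `L²`-norm of `u` on a domain `Ω ⊆ ℝ³`. -/
def norm3D (Ω : Set (ℝ × ℝ × ℝ)) (u : ℝ × ℝ × ℝ → ℂ) : ℝ := ∫ x in Ω, ‖u x‖ ^ 2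

/-- `λ(B;W_α)` : the bottom of the spectrum of the Neumann magnetic Laplacian on the
wedge `W_α` with constant magnetic field `B = (b₁,b₂,b₃)`. -/
def lambdaWedge (α b1 b2 b3 : ℝ) : ℝ :=
  sInf { r : ℝ | ∃ u : ℝ × ℝ × ℝ → ℂ, ContDiff ℝ (⊤ : ℕ∞) u ∧ HasCompactSupport u ∧
    0 < norm3D (wedge α) u ∧ r = energy3D (wedge α) b1 b2 b3 u / norm3D (wedge α) u }

/-- The de Gennes function `μ₁(ξ)`: bottom of the spectrum of the Neumann realization of
`−d²/dt² + (t−ξ)²` on the half-line. -/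
def deGennes (ξ : ℝ) : ℝ :=
  sInf { r : ℝ | ∃ u : ℝ → ℂ, ContDiff ℝ (⊤ : ℕ∞) u ∧ HasCompactSupport u ∧
    (0 < ∫ t in Ioi (0 : ℝ), ‖u t‖ ^ 2) ∧
    r = (∫ t in Ioi (0 : ℝ), ‖deriv u t‖ ^ 2 + (t - ξ) ^ 2 * ‖u t‖ ^ 2) /
        (∫ t in Ioi (0 : ℝ), ‖u t‖ ^ 2) }

/-- `Θ₀ := inf_ξ μ₁(ξ)`. -/
def Theta0 : ℝ := ⨅ ξ : ℝ, deGennes ξ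

/-- The half-space `{(s,t,z) : t > 0}` in ℝ³. -/
def halfSpace3 : Set (ℝ × ℝ × ℝ) := {x | 0 < x.2.1}

/-- `σ(θ)` : the bottom of the spectrum of the Neumann magnetic Laplacian on the half-space
with a unit magnetic field making angle `θ` with the boundary. -/
def sigmaHS (θ : ℝ) : ℝ :=
  sInf { r : ℝ | ∃ u : ℝ × ℝ × ℝ → ℂ, ContDiff ℝ (⊤ : ℕ∞) u ∧ HasCompactSupport u ∧
    (0 < ∫ x in halfSpace3, ‖u x‖ ^ 2) ∧
    r = (∫ x in halfSpace3,
          ‖fderiv ℝ u x (1, 0, 0)‖ ^ 2 + ‖fderiv ℝ u x (0, 1, 0)‖ ^ 2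
            + ‖(-Complex.I) * fderiv ℝ u x (0, 0, 1)
                - ((x.2.1 * Real.cos θ : ℝ) : ℂ) * u x
                + ((x.1 * Real.sin θ : ℝ) : ℂ) * u x‖ ^ 2) /
        (∫ x in halfSpace3, ‖u x‖ ^ 2) }

/-- `μ(α)` : the bottom of the spectrum of the magnetic Neumann Laplacian on the sector
`S_α` with unit constant (scalar) magnetic field. -/
def muSector (α : ℝ) : ℝ :=
  sInf { r : ℝ | ∃ u : ℝ × ℝ → ℂ, ContDiff ℝ (⊤ : ℕ∞) u ∧ HasCompactSupport u ∧
    0 < norm2D (sector α) u ∧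
    r = (∫ x in sector α,
          ‖(-Complex.I) * fderiv ℝ u x (1, 0) + (x.2 : ℂ) * u x‖ ^ 2
            + ‖fderiv ℝ u x (0, 1)‖ ^ 2) / norm2D (sector α) u }

end MagWedge

namespace MagWedge

/-- test function -/
def tf (a : ℝ) (p q : ℝ → ℝ) (x : ℝ × ℝ × ℝ) : ℂ :=
  Complex.exp (((a * (x.1 * x.2.1) : ℝ) : ℂ) * Complex.I) * ((p x.1 * p x.2.1 * q x.2.2 : ℝ) : ℂ)

lemma tf_contDiff (a : ℝ) (p q : ℝ → ℝ) (hp : ContDiff ℝ (⊤ : ℕ∞) p)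
    (hq : ContDiff ℝ (⊤ : ℕ∞) q) : ContDiff ℝ (⊤ : ℕ∞) (tf a p q) := by
  have h1 : ContDiff ℝ (⊤ : ℕ∞) (fun x : ℝ × ℝ × ℝ => ((a * (x.1 * x.2.1) : ℝ) : ℂ)) :=
    Complex.ofRealCLM.contDiff.comp (contDiff_const.mul (contDiff_fst.mul (contDiff_fst.comp contDiff_snd)))
  have h2 : ContDiff ℝ (⊤ : ℕ∞) (fun x : ℝ × ℝ × ℝ => ((p x.1 * p x.2.1 * q x.2.2 : ℝ) : ℂ)) :=
    Complex.ofRealCLM.contDiff.comp (((hp.comp contDiff_fst).mul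
      (hp.comp (contDiff_fst.comp contDiff_snd))).mul (hq.comp (contDiff_snd.comp contDiff_snd)))
  exact (h1.mul contDiff_const).cexp.mul h2

lemma tf_norm (a : ℝ) (p q : ℝ → ℝ) (x : ℝ × ℝ × ℝ) :
    ‖tf a p q x‖ ^ 2 = (p x.1 ^ 2 * p x.2.1 ^ 2) * q x.2.2 ^ 2 := by
  rw [tf, norm_mul, Complex.norm_exp_ofReal_mul_I, one_mul, Complex.norm_real, Real.norm_eq_abs,
    sq_abs]; ring

lemma key_norm (t A B : ℝ) :
    ‖Complex.exp ((t : ℂ) * Complex.I) * ((A : ℂ) + (B : ℂ) * Complex.I)‖ ^ 2 = A ^ 2 + B ^ 2 := by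
  rw [norm_mul, Complex.norm_exp_ofReal_mul_I, one_mul, Complex.sq_norm, Complex.normSq_add_mul_I]

lemma hd_gen (k : ℝ) (c : ℝ) (f : ℝ → ℝ) (f' s : ℝ) (hf : HasDerivAt f f' s) :
    HasDerivAt (fun s : ℝ => Complex.exp (((k * s : ℝ) : ℂ) * Complex.I) * ((f s * c : ℝ) : ℂ))
      (Complex.exp (((k * s : ℝ) : ℂ) * Complex.I) * (((f' * c : ℝ) : ℂ)
        + ((k * (f s * c) : ℝ) : ℂ) * Complex.I)) s := by
  have h1 : HasDerivAt (fun s : ℝ => ((k * s : ℝ) : ℂ)) ((k * 1 : ℝ) : ℂ) s :=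
    ((hasDerivAt_id s).const_mul k).ofReal_comp
  have h2 : HasDerivAt (fun s : ℝ => ((f s * c : ℝ) : ℂ)) ((f' * c : ℝ) : ℂ) s :=
    (hf.mul_const c).ofReal_comp
  refine ((h1.mul_const Complex.I).cexp.mul h2).congr_deriv ?_
  push_cast; ring

lemma tf_d1 (a : ℝ) (p q : ℝ → ℝ) (hp : ContDiff ℝ (⊤ : ℕ∞) p)
    (hq : ContDiff ℝ (⊤ : ℕ∞) q) (x : ℝ × ℝ × ℝ) :
    fderiv ℝ (tf a p q) x (1, 0, 0) = Complex.exp (((a * (x.1 * x.2.1) : ℝ) : ℂ) * Complex.I) *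
      (((deriv p x.1 * (p x.2.1 * q x.2.2) : ℝ) : ℂ)
        + ((a * x.2.1 * (p x.1 * p x.2.1 * q x.2.2) : ℝ) : ℂ) * Complex.I) := by
  obtain ⟨x1, x2, x3⟩ := x
  have hu := ((tf_contDiff a p q hp hq).differentiable (by simp) (x1, x2, x3)).hasFDerivAt
  have h := hu.comp_hasDerivAt x1
    ((hasDerivAt_id x1).prodMk ((hasDerivAt_const x1 x2).prodMk (hasDerivAt_const x1 x3)))
  have hp' := (hp.differentiable (by simp) x1).hasDerivAt
  have h2 := hd_gen (a * x2) (p x2 * q x3) p _ x1 hp'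
  have e : (tf a p q ∘ fun s : ℝ => (id s, x2, x3)) = (fun s : ℝ =>
      Complex.exp (((a * x2 * s : ℝ) : ℂ) * Complex.I) * ((p s * (p x2 * q x3) : ℝ) : ℂ)) := by
    funext s
    simp only [tf, Function.comp, id]
    push_cast
    ring_nf
  rw [e] at h
  rw [h.unique h2]
  push_cast; ring_nf

lemma tf_d2 (a : ℝ) (p q : ℝ → ℝ) (hp : ContDiff ℝ (⊤ : ℕ∞) p)
    (hq : ContDiff ℝ (⊤ : ℕ∞) q) (x : ℝ × ℝ × ℝ) :
    fderiv ℝ (tf a p q) x (0, 1, 0) = Complex.exp (((a * (x.1 * x.2.1) : ℝ) : ℂ) * Complex.I) *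
      (((deriv p x.2.1 * (p x.1 * q x.2.2) : ℝ) : ℂ)
        + ((a * x.1 * (p x.1 * p x.2.1 * q x.2.2) : ℝ) : ℂ) * Complex.I) := by
  obtain ⟨x1, x2, x3⟩ := x
  have hu := ((tf_contDiff a p q hp hq).differentiable (by simp) (x1, x2, x3)).hasFDerivAt
  have h := hu.comp_hasDerivAt x2
    ((hasDerivAt_const x2 x1).prodMk ((hasDerivAt_id x2).prodMk (hasDerivAt_const x2 x3)))
  have hp' := (hp.differentiable (by simp) x2).hasDerivAt
  have h2 := hd_gen (a * x1) (p x1 * q x3) p _ x2 hp'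
  have e : (tf a p q ∘ fun s : ℝ => (x1, id s, x3)) = (fun s : ℝ =>
      Complex.exp (((a * x1 * s : ℝ) : ℂ) * Complex.I) * ((p s * (p x1 * q x3) : ℝ) : ℂ)) := by
    funext s
    simp only [tf, Function.comp, id]
    push_cast
    ring_nf
  rw [e] at h
  rw [h.unique h2]
  push_cast; ring_nf

lemma tf_d3 (a : ℝ) (p q : ℝ → ℝ) (hp : ContDiff ℝ (⊤ : ℕ∞) p)
    (hq : ContDiff ℝ (⊤ : ℕ∞) q) (x : ℝ × ℝ × ℝ) :
    fderiv ℝ (tf a p q) x (0, 0, 1) = Complex.exp (((a * (x.1 * x.2.1) : ℝ) : ℂ) * Complex.I) *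
      ((deriv q x.2.2 * (p x.1 * p x.2.1) : ℝ) : ℂ) := by
  obtain ⟨x1, x2, x3⟩ := x
  have hu := ((tf_contDiff a p q hp hq).differentiable (by simp) (x1, x2, x3)).hasFDerivAt
  have h := hu.comp_hasDerivAt x3
    ((hasDerivAt_const x3 x1).prodMk ((hasDerivAt_const x3 x2).prodMk (hasDerivAt_id x3)))
  have hq' := (hq.differentiable (by simp) x3).hasDerivAt
  have h2 : HasDerivAt (fun s : ℝ => Complex.exp (((a * (x1 * x2) : ℝ) : ℂ) * Complex.I) *
      ((q s * (p x1 * p x2) : ℝ) : ℂ)) (Complex.exp (((a * (x1 * x2) : ℝ) : ℂ) * Complex.I) *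
      ((deriv q x3 * (p x1 * p x2) : ℝ) : ℂ)) x3 :=
    ((hq'.mul_const (p x1 * p x2)).ofReal_comp).const_mul _
  have e : (tf a p q ∘ fun s : ℝ => (x1, x2, id s)) = (fun s : ℝ =>
      Complex.exp (((a * (x1 * x2) : ℝ) : ℂ) * Complex.I) * ((q s * (p x1 * p x2) : ℝ) : ℂ)) := by
    funext s
    simp only [tf, Function.comp, id]
    congr 2
    ring
  rw [e] at h
  exact h.unique h2

/-- planar energy density -/
def dens (a b1 b2 b3 : ℝ) (p p' : ℝ → ℝ) (y : ℝ × ℝ) : ℝ :=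
  (p' y.1 * p y.2) ^ 2 + (p y.1 * p' y.2) ^ 2 +
    ((a + b3) ^ 2 * y.2 ^ 2 + a ^ 2 * y.1 ^ 2 + (y.1 * b2 - y.2 * b1) ^ 2) * (p y.1 * p y.2) ^ 2

lemma tf_energy (a b1 b2 b3 : ℝ) (p q : ℝ → ℝ) (hp : ContDiff ℝ (⊤ : ℕ∞) p)
    (hq : ContDiff ℝ (⊤ : ℕ∞) q) (x : ℝ × ℝ × ℝ) :
    ‖(-Complex.I) * fderiv ℝ (tf a p q) x (1, 0, 0) + ((x.2.1 * b3 : ℝ) : ℂ) * tf a p q x‖ ^ 2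
      + ‖fderiv ℝ (tf a p q) x (0, 1, 0)‖ ^ 2
      + ‖(-Complex.I) * fderiv ℝ (tf a p q) x (0, 0, 1) - ((x.2.1 * b1 : ℝ) : ℂ) * tf a p q x
          + ((x.1 * b2 : ℝ) : ℂ) * tf a p q x‖ ^ 2
    = dens a b1 b2 b3 p (deriv p) (x.1, x.2.1) * q x.2.2 ^ 2
      + (p x.1 ^ 2 * p x.2.1 ^ 2) * deriv q x.2.2 ^ 2 := by
  rw [tf_d1 a p q hp hq, tf_d2 a p q hp hq, tf_d3 a p q hp hq]
  set E := Complex.exp (((a * (x.1 * x.2.1) : ℝ) : ℂ) * Complex.I) with hE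
  have e1 : (-Complex.I) * (E * (((deriv p x.1 * (p x.2.1 * q x.2.2) : ℝ) : ℂ)
        + ((a * x.2.1 * (p x.1 * p x.2.1 * q x.2.2) : ℝ) : ℂ) * Complex.I))
        + ((x.2.1 * b3 : ℝ) : ℂ) * tf a p q x
      = E * ((((a + b3) * x.2.1 * (p x.1 * p x.2.1 * q x.2.2) : ℝ) : ℂ)
        + ((-(deriv p x.1 * (p x.2.1 * q x.2.2)) : ℝ) : ℂ) * Complex.I) := by
    rw [tf, ← hE]
    push_cast
    linear_combination (-E * (a * x.2.1 * (p x.1 * p x.2.1 * q x.2.2))) * Complex.I_mul_I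
  have e3 : (-Complex.I) * (E * ((deriv q x.2.2 * (p x.1 * p x.2.1) : ℝ) : ℂ))
        - ((x.2.1 * b1 : ℝ) : ℂ) * tf a p q x + ((x.1 * b2 : ℝ) : ℂ) * tf a p q x
      = E * ((((x.1 * b2 - x.2.1 * b1) * (p x.1 * p x.2.1 * q x.2.2) : ℝ) : ℂ)
        + ((-(deriv q x.2.2 * (p x.1 * p x.2.1)) : ℝ) : ℂ) * Complex.I) := by
    rw [tf, ← hE]
    push_cast
    ring
  rw [e1, e3, hE, key_norm, key_norm, key_norm, dens]
  ring

lemma wedge_prod (α : ℝ) (F : ℝ × ℝ → ℝ) (k : ℝ → ℝ) :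
    ∫ x in wedge α, F (x.1, x.2.1) * k x.2.2 = (∫ y in sector α, F y) * ∫ t, k t := by
  have hmp : MeasurePreserving (MeasurableEquiv.prodAssoc : (ℝ × ℝ) × ℝ ≃ᵐ ℝ × ℝ × ℝ) :=
    volume_preserving_prodAssoc
  rw [← hmp.setIntegral_preimage_emb (MeasurableEquiv.measurableEmbedding _)]
  have : (MeasurableEquiv.prodAssoc : (ℝ × ℝ) × ℝ ≃ᵐ ℝ × ℝ × ℝ) ⁻¹' wedge α
      = sector α ×ˢ (univ : Set ℝ) := by
    ext x; simp [wedge, sector, MeasurableEquiv.prodAssoc]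
  rw [this]
  have h := setIntegral_prod_mul (μ := (volume : Measure (ℝ × ℝ))) (ν := (volume : Measure ℝ))
    F k (sector α) univ
  rw [setIntegral_univ] at h
  exact h

lemma sector_meas (α : ℝ) : MeasurableSet (sector α) := by
  apply measurableSet_le <;> fun_prop

lemma tf_compact (a : ℝ) (p q : ℝ → ℝ) (hp : HasCompactSupport p) (hq : HasCompactSupport q) :
    HasCompactSupport (tf a p q) := by
  refine HasCompactSupport.intro (K := tsupport p ×ˢ tsupport p ×ˢ tsupport q)
    (hp.isCompact.prod (hp.isCompact.prod hq.isCompact)) ?_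
  rintro ⟨x1, x2, x3⟩ hx
  simp only [mem_prod, not_and_or] at hx
  rcases hx with h | h | h <;> simp [tf, image_eq_zero_of_notMem_tsupport h]

lemma key_ineq (α a b1 b2 b3 : ℝ) (p q : ℝ → ℝ) (hp : ContDiff ℝ (⊤ : ℕ∞) p)
    (hq : ContDiff ℝ (⊤ : ℕ∞) q) (hpc : HasCompactSupport p) (hqc : HasCompactSupport q)
    (hpos : 0 < ∫ y in sector α, p y.1 ^ 2 * p y.2 ^ 2) (hqpos : 0 < ∫ t, q t ^ 2) :
    lambdaWedge α b1 b2 b3 * (∫ y in sector α, p y.1 ^ 2 * p y.2 ^ 2) * (∫ t, q t ^ 2) ≤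
      (∫ y in sector α, dens a b1 b2 b3 p (deriv p) y) * (∫ t, q t ^ 2)
      + (∫ y in sector α, p y.1 ^ 2 * p y.2 ^ 2) * ∫ t, deriv q t ^ 2 := by
  have hN : norm3D (wedge α) (tf a p q) =
      (∫ y in sector α, p y.1 ^ 2 * p y.2 ^ 2) * (∫ t, q t ^ 2) := by
    rw [norm3D, ← wedge_prod]
    simp only [tf_norm]
  have hcp : Continuous p := hp.continuous
  have hcq : Continuous q := hq.continuous
  have hcp' : Continuous (deriv p) := hp.continuous_deriv (by simp)
  have hcq' : Continuous (deriv q) := hq.continuous_deriv (by simp)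
  have hE : energy3D (wedge α) b1 b2 b3 (tf a p q) =
      (∫ y in sector α, dens a b1 b2 b3 p (deriv p) y) * (∫ t, q t ^ 2)
      + (∫ y in sector α, p y.1 ^ 2 * p y.2 ^ 2) * ∫ t, deriv q t ^ 2 := by
    rw [energy3D, ← wedge_prod, ← wedge_prod]
    simp only [tf_energy a b1 b2 b3 p q hp hq]
    have hK : IsCompact (tsupport p ×ˢ tsupport p ×ˢ tsupport q) :=
      (hpc.isCompact.prod (hpc.isCompact.prod hqc.isCompact))
    apply integral_add
    · apply Integrable.integrableOn
      apply Continuous.integrable_of_hasCompactSupport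
      · unfold dens; fun_prop
      · refine HasCompactSupport.intro hK ?_
        rintro ⟨x1, x2, x3⟩ hx
        simp only [mem_prod, not_and_or] at hx
        have hs : ∀ z, z ∉ tsupport p → deriv p z = 0 := fun z hz =>
          Function.notMem_support.mp fun hh => hz (support_deriv_subset hh)
        rcases hx with h | h | h
        · simp [dens, image_eq_zero_of_notMem_tsupport h, hs _ h]
        · simp [dens, image_eq_zero_of_notMem_tsupport h, hs _ h]
        · simp [image_eq_zero_of_notMem_tsupport h]
    · apply Integrable.integrableOn
      apply Continuous.integrable_of_hasCompactSupport
      · fun_prop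
      · refine HasCompactSupport.intro hK ?_
        rintro ⟨x1, x2, x3⟩ hx
        simp only [mem_prod, not_and_or] at hx
        have hs : ∀ z, z ∉ tsupport q → deriv q z = 0 := fun z hz =>
          Function.notMem_support.mp fun hh => hz (support_deriv_subset hh)
        rcases hx with h | h | h
        · simp [image_eq_zero_of_notMem_tsupport h]
        · simp [image_eq_zero_of_notMem_tsupport h]
        · simp [hs _ h]
  have hNpos : 0 < norm3D (wedge α) (tf a p q) := by rw [hN]; positivity
  have hle : lambdaWedge α b1 b2 b3 ≤
      energy3D (wedge α) b1 b2 b3 (tf a p q) / norm3D (wedge α) (tf a p q) := by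
    apply csInf_le
    · refine ⟨0, ?_⟩
      rintro r ⟨u, _, _, hu, rfl⟩
      refine div_nonneg ?_ hu.le
      exact integral_nonneg fun x => by positivity
    · exact ⟨_, tf_contDiff a p q hp hq, tf_compact a p q hpc hqc, hNpos, rfl⟩
  rw [le_div_iff₀ hNpos, hN, hE] at hle
  linarith

lemma mem_sector_polar (α : ℝ) (hα : α ∈ Set.Ioo 0 π) (r θ : ℝ) (hr : 0 < r)
    (hθ : θ ∈ Ioo (-π) π) :
    (r * cos θ, r * sin θ) ∈ sector α ↔ θ ∈ Icc (-(α / 2)) (α / 2) := by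
  obtain ⟨h0, h1⟩ := hα
  have hc : 0 < cos (α / 2) := cos_pos_of_mem_Ioo ⟨by linarith, by linarith⟩
  have e : (r * cos θ, r * sin θ) ∈ sector α ↔
      0 ≤ sin (α / 2 - θ) ∧ 0 ≤ sin (α / 2 + θ) := by
    simp only [sector, mem_ofPred_eq, abs_le, tan_eq_sin_div_cos, sin_sub, sin_add]
    have : r * cos θ * (sin (α / 2) / cos (α / 2)) = r * (cos θ * sin (α / 2) / cos (α / 2)) := by
      ring
    rw [this, neg_le, ← mul_neg, mul_le_mul_iff_right₀ hr, mul_le_mul_iff_right₀ hr,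
      le_div_iff₀ hc, le_div_iff₀ hc]
    constructor
    · rintro ⟨a, b⟩; constructor <;> linarith
    · rintro ⟨a, b⟩; constructor <;> linarith
  rw [e]
  constructor
  · rintro ⟨a, b⟩
    constructor
    · by_contra! h
      have : sin (α / 2 + θ) < 0 := sin_neg_of_neg_of_neg_pi_lt (by linarith) (by linarith [hθ.1])
      linarith
    · by_contra! h
      have : sin (α / 2 - θ) < 0 := sin_neg_of_neg_of_neg_pi_lt (by linarith) (by linarith [hθ.2])
      linarith
  · rintro ⟨a, b⟩
    exact ⟨sin_nonneg_of_nonneg_of_le_pi (by linarith) (by linarith),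
      sin_nonneg_of_nonneg_of_le_pi (by linarith) (by linarith)⟩

lemma sector_polar (α : ℝ) (hα : α ∈ Set.Ioo 0 π) (f : ℝ × ℝ → ℝ) (ρ h : ℝ → ℝ)
    (hf : ∀ r θ, r * f (r * cos θ, r * sin θ) = ρ r * h θ) :
    ∫ y in sector α, f y = (∫ r in Ioi 0, ρ r) * ∫ θ in (-(α / 2))..(α / 2), h θ := by
  rw [intervalIntegral.integral_of_le (by linarith [hα.1]), ← integral_Icc_eq_integral_Ioc,
    ← setIntegral_prod_mul, ← integral_indicator (sector_meas α), ← integral_comp_polarCoord_symm]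
  have hsub : Ioi (0:ℝ) ×ˢ Icc (-(α / 2)) (α / 2) ⊆ polarCoord.target := by
    rintro ⟨r, θ⟩ ⟨h1, h2⟩
    refine ⟨h1, ?_, ?_⟩ <;> simp at h2 ⊢ <;> linarith [hα.1, hα.2, h2.1, h2.2]
  have hm : MeasurableSet (Ioi (0:ℝ) ×ˢ Icc (-(α / 2)) (α / 2)) :=
    measurableSet_Ioi.prod measurableSet_Icc
  rw [← Measure.volume_eq_prod]
  rw [setIntegral_eq_of_subset_of_forall_sdiff_eq_zero
    (polarCoord.open_target.measurableSet) hsub (f := fun z : ℝ × ℝ =>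
      z.1 • (sector α).indicator f (polarCoord.symm z))]
  · apply setIntegral_congr_fun hm
    rintro ⟨r, θ⟩ hz
    have ht := hsub hz
    have : (r * cos θ, r * sin θ) ∈ sector α :=
      (mem_sector_polar α hα r θ ht.1 ht.2).2 hz.2
    simp only [polarCoord_symm_apply, indicator_of_mem this, smul_eq_mul, hf]
  · rintro ⟨r, θ⟩ ⟨ht, hz⟩
    have : (r * cos θ, r * sin θ) ∉ sector α := fun hh =>
      hz ⟨ht.1, (mem_sector_polar α hα r θ ht.1 ht.2).1 hh⟩
    simp only [polarCoord_symm_apply, indicator_of_notMem this, smul_zero]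

lemma int_r1 (c : ℝ) (hc : 0 < c) : ∫ r in Ioi (0:ℝ), r * exp (-(2 * c) * r ^ 2) = 1 / (4 * c) := by
  have h := integral_rpow_mul_exp_neg_mul_rpow (p := 2) (q := 1) (b := 2 * c) (by norm_num)
    (by norm_num) (by linarith)
  simp only [rpow_one, rpow_two] at h
  rw [h]
  norm_num [rpow_neg_one]
  field_simp; norm_num

lemma int_r3 (c : ℝ) (hc : 0 < c) :
    ∫ r in Ioi (0:ℝ), r ^ 3 * exp (-(2 * c) * r ^ 2) = 1 / (8 * c ^ 2) := by
  have h := integral_rpow_mul_exp_neg_mul_rpow (p := 2) (q := 3) (b := 2 * c) (by norm_num)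
    (by norm_num) (by linarith)
  have e : ∀ r : ℝ, r ^ (3:ℝ) = r ^ 3 := fun r => by exact_mod_cast rpow_natCast r 3
  simp only [e, rpow_two] at h
  rw [h]
  have e2 : (2 * c) ^ (-(2:ℝ)) = ((2 * c) ^ 2)⁻¹ := by
    rw [rpow_neg (by linarith)]; norm_cast
  norm_num [Gamma_two, e2]
  field_simp; norm_num

lemma trig_int (α A B C : ℝ) :
    ∫ θ in (-(α / 2))..(α / 2), (A * sin θ ^ 2 + B * cos θ ^ 2 + C * (sin θ * cos θ))
      = A * ((α - sin α) / 2) + B * ((α + sin α) / 2) := by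
  have hs : sin α = 2 * sin (α / 2) * cos (α / 2) := by rw [← sin_two_mul]; ring_nf
  rw [intervalIntegral.integral_add, intervalIntegral.integral_add,
    intervalIntegral.integral_const_mul, intervalIntegral.integral_const_mul,
    intervalIntegral.integral_const_mul, integral_sin_sq, integral_cos_sq, integral_sin_mul_cos₁,
    hs]
  · simp; ring
  all_goals apply Continuous.intervalIntegrable; fun_prop

lemma gauss_norm (α c : ℝ) (hα : α ∈ Set.Ioo 0 π) (hc : 0 < c) :
    ∫ y in sector α, exp (-c * y.1 ^ 2) ^ 2 * exp (-c * y.2 ^ 2) ^ 2 = α / (4 * c) := by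
  rw [sector_polar α hα _ (fun r => r * exp (-(2 * c) * r ^ 2)) (fun _ => 1), int_r1 c hc]
  · simp; ring
  · intro r θ
    simp only [← exp_nat_mul, ← exp_add, mul_one]
    congr 2
    linear_combination (-(2 * c) * r ^ 2) * sin_sq_add_cos_sq θ

lemma gauss_energy (α c a b1 b2 b3 : ℝ) (hα : α ∈ Set.Ioo 0 π) (hc : 0 < c) :
    ∫ y in sector α, dens a b1 b2 b3 (fun x => exp (-c * x ^ 2))
        (fun x => -2 * c * x * exp (-c * x ^ 2)) y
      = (1 / (8 * c ^ 2)) * ((4 * c ^ 2 + (a + b3) ^ 2 + b1 ^ 2) * ((α - sin α) / 2)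
        + (4 * c ^ 2 + a ^ 2 + b2 ^ 2) * ((α + sin α) / 2)) := by
  rw [sector_polar α hα _ (fun r => r ^ 3 * exp (-(2 * c) * r ^ 2)) (fun θ =>
    ((4 * c ^ 2 + (a + b3) ^ 2 + b1 ^ 2) * sin θ ^ 2 + (4 * c ^ 2 + a ^ 2 + b2 ^ 2) * cos θ ^ 2
      + (-2 * b1 * b2) * (sin θ * cos θ))), int_r3 c hc, trig_int]
  intro r θ
  have e : exp (-(2 * c) * r ^ 2) =
      (exp (-c * (r * cos θ) ^ 2) * exp (-c * (r * sin θ) ^ 2)) ^ 2 := by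
    rw [← exp_add, ← exp_nat_mul]
    congr 1
    push_cast
    linear_combination (2 * c * r ^ 2) * sin_sq_add_cos_sq θ
  rw [e, dens]
  ring

lemma final_alg (α γ : ℝ) (hα : α ∈ Set.Ioo 0 π) :
    ∃ a : ℝ, (a + cos γ) ^ 2 * ((α - sin α) / 2) + a ^ 2 * ((α + sin α) / 2)
      + (sin γ * cos (α / 2)) ^ 2 * ((α - sin α) / 2)
      + (sin γ * sin (α / 2)) ^ 2 * ((α + sin α) / 2)
      ≤ α ^ 3 * (1 + 3 * sin γ ^ 2) / 12 := by
  obtain ⟨h0, h1⟩ := hα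
  have hs : ∀ x : ℝ, 0 < x → x - x ^ 3 / 6 ≤ sin x := fun x hx => by
    exact sin_ge_sub_cube hx.le
  refine ⟨-cos γ * (1 - sin α / α) / 2, ?_⟩
  have hσ : α * (1 - (sin α / α) ^ 2) ≤ α ^ 3 / 3 := by
    have h2 := hs α h0
    have h3 : 1 - α ^ 2 / 6 ≤ sin α / α := by rw [le_div_iff₀ h0]; linarith
    have h4 : 1 - α ^ 2 / 3 ≤ (sin α / α) ^ 2 := by
      by_cases h : α ^ 2 ≤ 6
      · nlinarith
      · nlinarith [sq_nonneg (sin α / α)]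
    have h5 := mul_le_mul_of_nonneg_left h4 h0.le
    linarith
  have hσ2 : α / 2 - sin α * cos α / 2 ≤ α ^ 3 / 3 := by
    have h2 := hs (2 * α) (by linarith)
    rw [sin_two_mul] at h2
    linarith
  have e1 : (-cos γ * (1 - sin α / α) / 2 + cos γ) ^ 2 * ((α - sin α) / 2)
      + (-cos γ * (1 - sin α / α) / 2) ^ 2 * ((α + sin α) / 2)
      = cos γ ^ 2 / 4 * (α * (1 - (sin α / α) ^ 2)) := by
    field_simp; ring
  have hc2 : cos (α / 2) ^ 2 = (1 + cos α) / 2 := by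
    rw [cos_sq]; ring_nf
  have hs2 : sin (α / 2) ^ 2 = (1 - cos α) / 2 := by
    rw [sin_sq, hc2]; ring
  have e2 : (sin γ * cos (α / 2)) ^ 2 * ((α - sin α) / 2)
      + (sin γ * sin (α / 2)) ^ 2 * ((α + sin α) / 2)
      = sin γ ^ 2 * (α / 2 - sin α * cos α / 2) := by
    rw [mul_pow, mul_pow, hc2, hs2]; ring
  have h6 := mul_le_mul_of_nonneg_left hσ (by positivity : 0 ≤ cos γ ^ 2 / 4)
  have h7 := mul_le_mul_of_nonneg_left hσ2 (sq_nonneg (sin γ))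
  have h8 : cos γ ^ 2 = 1 - sin γ ^ 2 := cos_sq' γ
  rw [add_assoc, e1, e2]
  rw [h8] at h6 ⊢
  linarith

/-- The cut-off bump. -/
def bump : ContDiffBump (0 : ℝ) := ⟨1, 2, one_pos, one_lt_two⟩

/-- scaled bump -/
def qn (n : ℕ) (x : ℝ) : ℝ := bump (x / ((n : ℝ) + 1))

/-- truncated Gaussian -/
def pn (c : ℝ) (n : ℕ) (x : ℝ) : ℝ := exp (-c * x ^ 2) * qn n x

lemma qn_contDiff (n : ℕ) : ContDiff ℝ (⊤ : ℕ∞) (qn n) :=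
  bump.contDiff.comp (contDiff_id.div_const _)

lemma pn_contDiff (c : ℝ) (n : ℕ) : ContDiff ℝ (⊤ : ℕ∞) (pn c n) := by
  have h : ContDiff ℝ (⊤ : ℕ∞) (fun x : ℝ => exp (-c * x ^ 2)) := by fun_prop
  exact h.mul (qn_contDiff n)

lemma qn_compact (n : ℕ) : HasCompactSupport (qn n) := by
  have hm : ((n : ℝ) + 1) ≠ 0 := by positivity
  refine HasCompactSupport.intro (K := Icc (-(2 * ((n : ℝ) + 1))) (2 * ((n : ℝ) + 1)))
    isCompact_Icc ?_
  intro x hx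
  apply bump.zero_of_le_dist
  have hm' : (0 : ℝ) < (n : ℝ) + 1 := by positivity
  rw [dist_zero_right, Real.norm_eq_abs, abs_div, abs_of_pos hm', le_div_iff₀ hm']
  by_contra! h
  exact hx (abs_le.1 h.le)

lemma pn_compact (c : ℝ) (n : ℕ) : HasCompactSupport (pn c n) := (qn_compact n).mul_left

lemma qn_deriv (n : ℕ) (x : ℝ) :
    HasDerivAt (qn n) (deriv bump (x / ((n : ℝ) + 1)) / ((n : ℝ) + 1)) x := by
  have h1 : HasDerivAt (bump : ℝ → ℝ) (deriv bump (x / ((n : ℝ) + 1))) (x / ((n : ℝ) + 1)) :=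
    ((bump.contDiff (n := 1)).differentiable (by simp) _).hasDerivAt
  have h2 := h1.comp x ((hasDerivAt_id x).div_const ((n : ℝ) + 1))
  refine h2.congr_deriv ?_
  ring

lemma pn_deriv (c : ℝ) (n : ℕ) (x : ℝ) :
    deriv (pn c n) x = -2 * c * x * exp (-c * x ^ 2) * qn n x
      + exp (-c * x ^ 2) * (deriv bump (x / ((n : ℝ) + 1)) / ((n : ℝ) + 1)) := by
  have h1 : HasDerivAt (fun x : ℝ => exp (-c * x ^ 2)) (exp (-c * x ^ 2) * (-c * (2 * x))) x := by
    have := ((hasDerivAt_pow 2 x).const_mul (-c)).exp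
    simpa using this
  have h2 : HasDerivAt (pn c n) _ x := h1.mul (qn_deriv n x)
  rw [h2.deriv]
  ring

lemma qn_int (n : ℕ) : ∫ t, qn n t ^ 2 = ((n : ℝ) + 1) * ∫ t, bump t ^ 2 := by
  have hm' : (0 : ℝ) < (n : ℝ) + 1 := by positivity
  have := Measure.integral_comp_div (fun t => bump t ^ 2) ((n : ℝ) + 1)
  rw [abs_of_pos hm', smul_eq_mul] at this
  exact this

lemma qn_int' (n : ℕ) :
    ∫ t, deriv (qn n) t ^ 2 = (1 / ((n : ℝ) + 1)) * ∫ t, deriv bump t ^ 2 := by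
  have hm' : (0 : ℝ) < (n : ℝ) + 1 := by positivity
  have := Measure.integral_comp_div (fun t => deriv bump t ^ 2) ((n : ℝ) + 1)
  rw [abs_of_pos hm', smul_eq_mul] at this
  simp only [fun t => (qn_deriv n t).deriv, div_pow, integral_div]
  rw [this]
  field_simp

lemma bump_int_pos : 0 < ∫ t, bump t ^ 2 := by
  have hc : Continuous (fun t : ℝ => bump t ^ 2) := bump.continuous.pow 2
  have hcs : HasCompactSupport (fun t : ℝ => bump t ^ 2) :=
    bump.hasCompactSupport.comp_left (g := fun z : ℝ => z ^ 2) (by simp)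
  refine hc.integral_pos_of_hasCompactSupport_nonneg_nonzero hcs (fun t => by positivity) (x := 0) ?_
  have : bump 0 = 1 := bump.one_of_mem_closedBall (by simp [bump])
  simp [this]

lemma bump_deriv_bdd : ∃ C : ℝ, 0 ≤ C ∧ ∀ x, |deriv bump x| ≤ C := by
  have hc : Continuous (deriv bump) := (bump.contDiff (n := 1)).continuous_deriv (by simp)
  obtain ⟨C, hC⟩ := hc.bounded_above_of_compact_support bump.hasCompactSupport.deriv
  exact ⟨C, (norm_nonneg _).trans (hC 0), hC⟩

lemma div_tendsto (x : ℝ) : Tendsto (fun n : ℕ => x / ((n : ℝ) + 1)) atTop (nhds 0) := by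
  apply Tendsto.const_div_atTop
  exact tendsto_atTop_add_const_right _ _ tendsto_natCast_atTop_atTop

lemma qn_tendsto (x : ℝ) : Tendsto (fun n => qn n x) atTop (nhds 1) := by
  have h := (bump.continuous.tendsto 0).comp (div_tendsto x)
  have : bump 0 = 1 := bump.one_of_mem_closedBall (by simp [bump])
  rwa [this] at h

lemma pn_tendsto (c x : ℝ) : Tendsto (fun n => pn c n x) atTop (nhds (exp (-c * x ^ 2))) := by
  have h := (qn_tendsto x).const_mul (exp (-c * x ^ 2))
  rw [mul_one] at h
  exact h

lemma pn'_tendsto (c x : ℝ) : Tendsto (fun n => deriv (pn c n) x) atTop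
    (nhds (-2 * c * x * exp (-c * x ^ 2))) := by
  simp only [pn_deriv]
  have hc : Continuous (deriv bump) := (bump.contDiff (n := 1)).continuous_deriv (by simp)
  have h1 := (hc.tendsto 0).comp (div_tendsto x)
  have h2 := (h1.mul (div_tendsto 1)).const_mul (exp (-c * x ^ 2))
  have h3 := (qn_tendsto x).const_mul (-2 * c * x * exp (-c * x ^ 2))
  have h := h3.add h2
  simp only [mul_one, mul_zero, add_zero] at h
  refine h.congr fun n => ?_
  simp only [Function.comp]
  ring

lemma pn_sq_le (c x : ℝ) (n : ℕ) : pn c n x ^ 2 ≤ exp (-c * x ^ 2) ^ 2 := by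
  have h0 : 0 ≤ qn n x := bump.nonneg
  have h1 : qn n x ≤ 1 := bump.le_one
  apply pow_le_pow_left₀ (mul_nonneg (exp_pos _).le h0)
  exact mul_le_of_le_one_right (exp_pos _).le h1

lemma pn'_sq_le (c x C : ℝ) (hC : ∀ x, |deriv bump x| ≤ C) (n : ℕ) :
    deriv (pn c n) x ^ 2 ≤ (8 * c ^ 2 * x ^ 2 + 2 * C ^ 2) * exp (-c * x ^ 2) ^ 2 := by
  have h0 : 0 ≤ qn n x := bump.nonneg
  have h1 : qn n x ≤ 1 := bump.le_one
  rw [pn_deriv]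
  set d := deriv bump (x / ((n : ℝ) + 1)) / ((n : ℝ) + 1) with hd
  have hdC : |d| ≤ C := by
    rw [hd, abs_div, abs_of_pos (by positivity : (0:ℝ) < (n : ℝ) + 1)]
    refine (div_le_self (abs_nonneg _) ?_).trans (hC _)
    have : (0:ℝ) ≤ n := by positivity
    linarith
  have hd2 : d ^ 2 ≤ C ^ 2 := sq_le_sq' (abs_le.1 hdC).1 (abs_le.1 hdC).2
  have hq2 : qn n x ^ 2 ≤ 1 := pow_le_one₀ h0 h1
  have e : (-2 * c * x * exp (-c * x ^ 2) * qn n x + exp (-c * x ^ 2) * d) ^ 2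
      = (-2 * c * x * qn n x + d) ^ 2 * exp (-c * x ^ 2) ^ 2 := by ring
  rw [e]
  apply mul_le_mul_of_nonneg_right _ (by positivity)
  have h3 := mul_le_mul_of_nonneg_left hq2 (by positivity : 0 ≤ 8 * c ^ 2 * x ^ 2)
  nlinarith [sq_nonneg (-2 * c * x * qn n x - d)]

lemma g_int (c : ℝ) (hc : 0 < c) : Integrable (fun x : ℝ => exp (-c * x ^ 2) ^ 2) := by
  have h := integrable_exp_neg_mul_sq (b := 2 * c) (by linarith)
  refine h.congr (Eventually.of_forall fun x => ?_)
  simp only [← exp_nat_mul]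
  congr 1; push_cast; ring

lemma g2_int (c : ℝ) (hc : 0 < c) : Integrable (fun x : ℝ => x ^ 2 * exp (-c * x ^ 2) ^ 2) := by
  have h := integrable_rpow_mul_exp_neg_mul_sq (b := 2 * c) (by linarith) (s := 2) (by norm_num)
  refine h.congr (Eventually.of_forall fun x => ?_)
  simp only [← exp_nat_mul, rpow_two]
  congr 2; push_cast; ring

lemma A_tendsto (α c : ℝ) (hα : α ∈ Set.Ioo 0 π) (hc : 0 < c) :
    Tendsto (fun n => ∫ y in sector α, pn c n y.1 ^ 2 * pn c n y.2 ^ 2) atTop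
      (nhds (α / (4 * c))) := by
  rw [← gauss_norm α c hα hc]
  refine tendsto_integral_of_dominated_convergence
    (fun y : ℝ × ℝ => exp (-c * y.1 ^ 2) ^ 2 * exp (-c * y.2 ^ 2) ^ 2) ?_ ?_ ?_ ?_
  · intro n
    have := (pn_contDiff c n).continuous
    exact Continuous.aestronglyMeasurable (by fun_prop)
  · exact ((g_int c hc).mul_prod (g_int c hc)).integrableOn
  · intro n
    refine Eventually.of_forall fun y => ?_
    rw [Real.norm_eq_abs, abs_of_nonneg (by positivity)]
    exact mul_le_mul (pn_sq_le _ _ _) (pn_sq_le _ _ _) (by positivity) (by positivity)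
  · exact Eventually.of_forall fun y => ((pn_tendsto c _).pow 2).mul ((pn_tendsto c _).pow 2)

lemma E_tendsto (α c a b1 b2 b3 : ℝ) (hc : 0 < c) :
    Tendsto (fun n => ∫ y in sector α, dens a b1 b2 b3 (pn c n) (deriv (pn c n)) y) atTop
      (nhds (∫ y in sector α, dens a b1 b2 b3 (fun x => exp (-c * x ^ 2))
        (fun x => -2 * c * x * exp (-c * x ^ 2)) y)) := by
  obtain ⟨C, hC0, hC⟩ := bump_deriv_bdd
  set M1 := 8 * c ^ 2 + a ^ 2 + 2 * b2 ^ 2 with hM1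
  set M2 := 8 * c ^ 2 + (a + b3) ^ 2 + 2 * b1 ^ 2 with hM2
  refine tendsto_integral_of_dominated_convergence
    (fun y : ℝ × ℝ =>
      M1 * ((y.1 ^ 2 * exp (-c * y.1 ^ 2) ^ 2) * exp (-c * y.2 ^ 2) ^ 2)
      + M2 * (exp (-c * y.1 ^ 2) ^ 2 * (y.2 ^ 2 * exp (-c * y.2 ^ 2) ^ 2))
      + 4 * C ^ 2 * (exp (-c * y.1 ^ 2) ^ 2 * exp (-c * y.2 ^ 2) ^ 2)) ?_ ?_ ?_ ?_
  · intro n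
    have := (pn_contDiff c n).continuous
    have := (pn_contDiff c n).continuous_deriv (by simp)
    apply Continuous.aestronglyMeasurable
    unfold dens
    fun_prop
  · apply Integrable.integrableOn
    exact ((((g2_int c hc).mul_prod (g_int c hc)).const_mul M1).add
      (((g_int c hc).mul_prod (g2_int c hc)).const_mul M2)).add
      (((g_int c hc).mul_prod (g_int c hc)).const_mul (4 * C ^ 2))
  · intro n
    refine Eventually.of_forall fun y => ?_
    rw [Real.norm_eq_abs, dens, abs_of_nonneg (by positivity)]
    have h1 := pn_sq_le c y.1 n
    have h2 := pn_sq_le c y.2 n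
    have h3 := pn'_sq_le c y.1 C hC n
    have h4 := pn'_sq_le c y.2 C hC n
    simp only [mul_pow]
    have k1 := mul_le_mul h3 h2 (by positivity) (by positivity)
    have k2 := mul_le_mul h1 h4 (by positivity) (by positivity)
    have k3 := mul_le_mul h1 h2 (by positivity) (by positivity)
    have hQ : (a + b3) ^ 2 * y.2 ^ 2 + a ^ 2 * y.1 ^ 2 + (y.1 * b2 - y.2 * b1) ^ 2
        ≤ (a ^ 2 + 2 * b2 ^ 2) * y.1 ^ 2 + ((a + b3) ^ 2 + 2 * b1 ^ 2) * y.2 ^ 2 := by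
      nlinarith [sq_nonneg (y.1 * b2 + y.2 * b1)]
    have k4 := mul_le_mul hQ k3 (by positivity) (by positivity)
    refine (add_le_add (add_le_add k1 k2) k4).trans (le_of_eq ?_)
    rw [hM1, hM2]
    ring
  · refine Eventually.of_forall fun y => ?_
    have h1 := pn_tendsto c y.1
    have h2 := pn_tendsto c y.2
    exact ((((pn'_tendsto c y.1).mul h2).pow 2).add ((h1.mul (pn'_tendsto c y.2)).pow 2)).add
      (((h1.mul h2).pow 2).const_mul _)

lemma limit_ineq (α c a b1 b2 b3 : ℝ) (hα : α ∈ Set.Ioo 0 π) (hc : 0 < c) :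
    lambdaWedge α b1 b2 b3 * (α / (4 * c)) ≤
      (1 / (8 * c ^ 2)) * ((4 * c ^ 2 + (a + b3) ^ 2 + b1 ^ 2) * ((α - sin α) / 2)
        + (4 * c ^ 2 + a ^ 2 + b2 ^ 2) * ((α + sin α) / 2)) := by
  have hA := A_tendsto α c hα hc
  have hE := E_tendsto α c a b1 b2 b3 hc
  rw [gauss_energy α c a b1 b2 b3 hα hc] at hE
  have hApos : 0 < α / (4 * c) := div_pos hα.1 (by linarith)
  have hk := bump_int_pos
  have hR := hE.add ((hA.mul (((div_tendsto 1).pow 2))).mul_const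
    ((∫ t, deriv bump t ^ 2) / ∫ t, bump t ^ 2))
  simp only [ne_eq, OfNat.ofNat_ne_zero, not_false_eq_true, zero_pow, mul_zero, zero_mul,
    add_zero] at hR
  refine le_of_tendsto_of_tendsto (hA.const_mul _) hR ?_
  filter_upwards [hA.eventually (lt_mem_nhds hApos)] with n hn
  have hm' : (0 : ℝ) < (n : ℝ) + 1 := by positivity
  have h := key_ineq α a b1 b2 b3 (pn c n) (qn n) (pn_contDiff c n) (qn_contDiff n)
    (pn_compact c n) (qn_compact n) hn (by rw [qn_int]; positivity)
  rw [qn_int, qn_int'] at h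
  have hmk : 0 < ((n : ℝ) + 1) * ∫ t, bump t ^ 2 := by positivity
  rw [← le_div_iff₀ hmk] at h
  refine h.trans (le_of_eq ?_)
  field_simp

end MagWedge

open MagWedge in
/-- rough upper bound `λ(B;W_α) ≤ α(1/√3 + (√3/2)sin²γ)`. -/
theorem lambdaWedge_rough_upper_bound (α γ : ℝ) (hα : α ∈ Set.Ioo 0 π)
    (hγ : γ ∈ Set.Icc 0 (π / 2)) :
    lambdaWedge α (Real.sin γ * Real.cos (α / 2)) (Real.sin γ * Real.sin (α / 2)) (Real.cos γ)
      ≤ α * (1 / Real.sqrt 3 + Real.sqrt 3 / 2 * Real.sin γ ^ 2) := by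
  obtain ⟨a, ha⟩ := final_alg α γ hα
  have h0 := hα.1
  have h3 : (0:ℝ) < Real.sqrt 3 := by positivity
  have h33 : Real.sqrt 3 ^ 2 = 3 := Real.sq_sqrt (by norm_num)
  set w := Real.sqrt 3 with hw
  set c := α / (4 * w) with hcdef
  have hc : 0 < c := by positivity
  have h := limit_ineq α c a (sin γ * cos (α / 2)) (sin γ * sin (α / 2)) (cos γ) hα hc
  have e1 : α / (4 * c) = w := by rw [hcdef]; field_simp
  have e2 : 1 / (8 * c ^ 2) = 6 / α ^ 2 := by
    rw [hcdef, div_pow, mul_pow, h33]; field_simp; norm_num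
  have e3 : 4 * c ^ 2 = α ^ 2 / 12 := by
    rw [hcdef, div_pow, mul_pow, h33]; ring
  rw [e1, e2, e3] at h
  have hfin : lambdaWedge α (sin γ * cos (α / 2)) (sin γ * sin (α / 2)) (cos γ) * w
      ≤ α * (1 + 3 / 2 * sin γ ^ 2) := by
    refine h.trans ?_
    rw [div_mul_eq_mul_div, div_le_iff₀ (by positivity)]
    nlinarith [ha]
  rw [← le_div_iff₀ h3] at hfin
  refine hfin.trans (le_of_eq ?_)
  have : (1:ℝ) + 3 / 2 * sin γ ^ 2 = 1 + w ^ 2 / 2 * sin γ ^ 2 := by rw [h33]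
  rw [this]
  field_simp
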